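/- arXiv:2205.00881 — 2 statements merged into one kernel-verified Lean document; each statement's English description precedes it below -/
import Mathlib

section
/- For every m > 3 there exist a profile P over m alternatives that has a Condorcet winner, and an update order σ, such that MD_σ(P) has no Condorcet winner. -/
attribute [local instance] Classical.propDecidable

noncomputable section

/-- A preference over the set of alternatives `A`: a binary relation. -/
abbrev Pref (A : Type) := A → A → Prop

/-- A preference is a strict partial order: irreflexive and transitive. -/
def IsPref {A : Type} (pref : Pref A) : Prop :=
  Irreflexive pref ∧ Transitive pref

variable {A : Type} [Fintype A] [DecidableEq A]

/-- The support `n_P(ab)`: the number of agents preferring `a` to `b` in profile `P`. -/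
def support {n : ℕ} (P : Fin n → Pref A) (a b : A) : ℕ :=
  (Finset.univ.filter fun i => P i a b).card

/-- An update order: a list of ordered pairs of distinct alternatives containing,
for each unordered pair `{a, b}` of distinct alternatives, exactly one of `ab` or `ba`,
each exactly once. -/
def IsUpdateOrder (σ : List (A × A)) : Prop :=
  (∀ p ∈ σ, p.1 ≠ p.2) ∧
  (∀ a b : A, a ≠ b → σ.count (a, b) + σ.count (b, a) = 1)

/-- One step of majority dynamics, discussing the pair `p`: agents already ranking
`p.1` versus `p.2` keep their preference; every other agent adds `p.1 ≻ p.2` if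
`n_P(p.1 p.2) ≥ n_P(p.2 p.1)` (ties broken in favour of the first alternative of the
pair), and otherwise adds `p.2 ≻ p.1`, then takes the transitive closure. -/
def mdStep {n : ℕ} (P : Fin n → Pref A) (p : A × A) : Fin n → Pref A :=
  fun i =>
    if P i p.1 p.2 ∨ P i p.2 p.1 then P i
    else if support P p.2 p.1 ≤ support P p.1 p.2 then
      Relation.TransGen (fun x y => P i x y ∨ (x = p.1 ∧ y = p.2))
    else
      Relation.TransGen (fun x y => P i x y ∨ (x = p.2 ∧ y = p.1))

/-- Majority dynamics `MD_σ(P)`: process the pairs of the update order `σ` in order. -/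
def MD {n : ℕ} (σ : List (A × A)) (P : Fin n → Pref A) : Fin n → Pref A :=
  σ.foldl mdStep P

/-- `a` is a Condorcet winner in `P`. -/
def CondorcetWinner {n : ℕ} (P : Fin n → Pref A) (a : A) : Prop :=
  ∀ b, b ≠ a → support P b a < support P a b

/-- `a` is a Condorcet loser in `P`. -/
def CondorcetLoser {n : ℕ} (P : Fin n → Pref A) (a : A) : Prop :=
  ∀ b, b ≠ a → support P a b < support P b a

/-- `a` is undominated in a preference. -/
def Undominated {A : Type} (pref : Pref A) (a : A) : Prop := ∀ b, ¬ pref b a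

/-- `a` is dominant in a preference. -/
def Dominant {A : Type} (pref : Pref A) (a : A) : Prop := ∀ b, b ≠ a → pref a b

/-- `a` is dominated (by every other alternative) in a preference. -/
def DominatedIn {A : Type} (pref : Pref A) (a : A) : Prop := ∀ b, b ≠ a → pref b a

/-- Number of preferences of `P` in which `a` is undominated. -/
def udCount {n : ℕ} (P : Fin n → Pref A) (a : A) : ℕ :=
  (Finset.univ.filter fun i => Undominated (P i) a).card

/-- Number of preferences of `P` in which `a` is dominant. -/
def domCount {n : ℕ} (P : Fin n → Pref A) (a : A) : ℕ :=
  (Finset.univ.filter fun i => Dominant (P i) a).card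

/-- Number of preferences of `P` in which `a` is dominated. -/
def domdCount {n : ℕ} (P : Fin n → Pref A) (a : A) : ℕ :=
  (Finset.univ.filter fun i => DominatedIn (P i) a).card

/-- `a` is undominated in at least one preference and no alternative is undominated
in strictly more preferences than `a`. -/
def PlurUDTop {n : ℕ} (P : Fin n → Pref A) (a : A) : Prop :=
  0 < udCount P a ∧ ∀ b, udCount P b ≤ udCount P a

/-- `a` is the PlurUD-consensus alternative of `P`. -/
def PlurUDConsensus {n : ℕ} (P : Fin n → Pref A) (a : A) : Prop :=
  PlurUDTop P a ∧ ∀ b, PlurUDTop P b → b = a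

/-- `a` is dominant in at least one preference and no alternative is dominant
in strictly more preferences than `a`. -/
def PlurDomTop {n : ℕ} (P : Fin n → Pref A) (a : A) : Prop :=
  0 < domCount P a ∧ ∀ b, domCount P b ≤ domCount P a

/-- `a` is the PlurDom-consensus alternative of `P`. -/
def PlurDomConsensus {n : ℕ} (P : Fin n → Pref A) (a : A) : Prop :=
  PlurDomTop P a ∧ ∀ b, PlurDomTop P b → b = a

/-- `a` is dominated in at least one preference and no alternative is dominated
in strictly more preferences than `a`. -/
def PlurDomdTop {n : ℕ} (P : Fin n → Pref A) (a : A) : Prop :=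
  0 < domdCount P a ∧ ∀ b, domdCount P b ≤ domdCount P a

/-- `a` is the (unique) plurality dominated alternative of `P`. -/
def PlurDomdConsensus {n : ℕ} (P : Fin n → Pref A) (a : A) : Prop :=
  PlurDomdTop P a ∧ ∀ b, PlurDomdTop P b → b = a

/-- `a` is the MajUD-consensus alternative of `P`: undominated in strictly more than
`n / 2` of the preferences, and the unique alternative with this property. -/
def MajUDConsensus {n : ℕ} (P : Fin n → Pref A) (a : A) : Prop :=
  (n < 2 * udCount P a) ∧ ∀ b, n < 2 * udCount P b → b = a

/-- `a` is the MajDom-consensus alternative of `P`: dominant in strictly more than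
`n / 2` of the preferences (such an alternative is automatically unique). -/
def MajDomConsensus {n : ℕ} (P : Fin n → Pref A) (a : A) : Prop :=
  n < 2 * domCount P a

/-- `a` is the UnanUD-consensus alternative of `P`: undominated in every preference,
and the unique alternative with this property. -/
def UnanUDConsensus {n : ℕ} (P : Fin n → Pref A) (a : A) : Prop :=
  (∀ i, Undominated (P i) a) ∧ ∀ b, (∀ i, Undominated (P i) b) → b = a

/-- `a` is the UnanDom-consensus alternative of `P`: dominant in every preference. -/
def UnanDomConsensus {n : ℕ} (P : Fin n → Pref A) (a : A) : Prop :=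
  ∀ i, Dominant (P i) a

/-- A preference is a strict weak ordering: there is an ordered partition of the
alternatives into levels (given by a level function `f`) such that alternatives in the
same level are incomparable, and `a ≻ b` exactly when `a` is in an earlier level. -/
def IsSWO (pref : Pref A) : Prop :=
  ∃ (k : ℕ) (f : A → Fin k), ∀ a b : A, pref a b ↔ f a < f b

/-!
Over four alternatives take the agents `b ≻ c, d ≻ a`; `c ≻ b, a ≻ d`; `a ≻ b, c, d` with `c ≻ b`;
and `b ≻ c`. The Condorcet winner is `a`, and it beats `b` only by `1 : 0`. Discussing `cd` first
turns the first agent into `b ≻ c ≻ d ≻ a` and leaves the ranking of `a` and `b` by the others as it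
was, so that `ba` is now tied and, discussed next, is adopted by the undecided. From then on at
least half of the agents prefer `b` to `a`, `c` to `b`, `b` to `c` and `c` to `d`; rankings are
never revised, so no continuation produces a Condorcet winner. Further alternatives are placed below
these four by every agent: steps on pairs among the four depend only on the rankings of the four.
-/

section Adopt

variable {α : Type} {R : Pref α} {u v x y : α}

lemma IsPref.isTrans (hR : IsPref R) : IsTrans α R :=
  ⟨hR.2⟩

lemma IsPref.asymm (hR : IsPref R) (hxy : R x y) : ¬ R y x :=
  fun hyx => hR.1 x (hR.2 hxy hyx)

/-- The preference of an agent with preference `R` once she is asked to adopt `u ≻ v`: nothing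
changes if she ranks `v` above `u`, and otherwise `u ≻ v` and its consequences are added. The
formula for these consequences is correct only for transitive `R`. -/
def adopt (R : Pref α) (u v : α) : Pref α :=
  fun x y => R x y ∨ ¬ R v u ∧ (x = u ∨ R x u) ∧ (y = v ∨ R v y)

lemma transGen_insert_iff [IsTrans α R] :
    Relation.TransGen (fun x y => R x y ∨ (x = u ∧ y = v)) x y ↔
      R x y ∨ (x = u ∨ R x u) ∧ (y = v ∨ R v y) := by
  constructor
  · intro h
    induction h with
    | single h => grind
    | tail _ h ih => grind [IsTrans.trans (r := R)]
  · have of_rel {x y} (h : R x y) : Relation.TransGen (fun x y => R x y ∨ (x = u ∧ y = v)) x y :=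
      .single (.inl h)
    have new_pair : Relation.TransGen (fun x y => R x y ∨ (x = u ∧ y = v)) u v :=
      .single (.inr ⟨rfl, rfl⟩)
    rintro (hxy | ⟨rfl | hxu, rfl | hvy⟩)
    · exact of_rel hxy
    · exact new_pair
    · exact new_pair.trans (of_rel hvy)
    · exact (of_rel hxu).trans new_pair
    · exact ((of_rel hxu).trans new_pair).trans (of_rel hvy)

lemma adopt_eq_transGen [IsTrans α R] (hvu : ¬ R v u) :
    adopt R u v = Relation.TransGen (fun x y => R x y ∨ (x = u ∧ y = v)) := by
  ext x y
  simp only [adopt, hvu, not_false_eq_true, true_and, transGen_insert_iff]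

lemma adopt_eq_self [IsTrans α R] (h : R u v ∨ R v u) : adopt R u v = R := by
  ext x y
  grind [adopt, IsTrans.trans (r := R)]

lemma isPref_adopt (hR : IsPref R) (huv : u ≠ v) : IsPref (adopt R u v) := by
  have := hR.isTrans
  constructor
  · intro x
    grind [adopt, hR.1 x, IsTrans.trans (r := R)]
  · intro x y z
    grind [adopt, hR.asymm, IsTrans.trans (r := R)]

end Adopt

section MajorityDynamics

variable {α β : Type} {n : ℕ} {P : Fin n → Pref α}

lemma mdStep_eq (hP : ∀ i, IsTrans α (P i)) (u v : α) :
    mdStep P (u, v) = fun i =>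
      if support P v u ≤ support P u v then adopt (P i) u v else adopt (P i) v u := by
  ext1 i
  grind [mdStep, adopt_eq_transGen, adopt_eq_self]

lemma isTrans_mdStep (hP : ∀ i, IsTrans α (P i)) (p : α × α) (i : Fin n) :
    IsTrans α (mdStep P p i) := by
  unfold mdStep
  split_ifs
  · exact hP i
  · infer_instance
  · infer_instance

lemma isPref_mdStep (hP : ∀ i, IsPref (P i)) {p : α × α} (hp : p.1 ≠ p.2) (i : Fin n) :
    IsPref (mdStep P p i) := by
  rw [mdStep_eq fun i => (hP i).isTrans]
  dsimp only
  split_ifs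
  · exact isPref_adopt (hP i) hp
  · exact isPref_adopt (hP i) hp.symm

lemma isPref_MD {σ : List (α × α)} (hP : ∀ i, IsPref (P i)) (hσ : ∀ p ∈ σ, p.1 ≠ p.2) :
    ∀ i, IsPref (MD σ P i) :=
  List.foldlRecOn (motive := fun Q : Fin n → Pref α => ∀ i, IsPref (Q i)) σ mdStep hP
    fun _ hQ p hp => isPref_mdStep hQ (hσ p hp)

lemma le_mdStep (P : Fin n → Pref α) (p : α × α) : P ≤ mdStep P p := by
  intro i x y hxy
  unfold mdStep
  split_ifs
  · exact hxy
  · exact .single (.inl hxy)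
  · exact .single (.inl hxy)

lemma le_MD (σ : List (α × α)) (P : Fin n → Pref α) : P ≤ MD σ P :=
  List.foldlRecOn (motive := fun Q => P ≤ Q) σ mdStep le_rfl
    fun Q hQ p _ => hQ.trans (le_mdStep Q p)

lemma support_preimage (f : β → α) (P : Fin n → Pref α) (u v : β) :
    support (fun i => f ⁻¹'o P i) u v = support P (f u) (f v) :=
  rfl

lemma preimage_adopt (f : β ↪ α) (R : Pref α) (u v : β) :
    f ⁻¹'o adopt R (f u) (f v) = adopt (f ⁻¹'o R) u v := by
  ext x y
  simp only [adopt, Order.Preimage, f.injective.eq_iff]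

lemma preimage_mdStep (hP : ∀ i, IsTrans α (P i)) (f : β ↪ α) (p : β × β) :
    (fun i => f ⁻¹'o mdStep P (p.map f f) i) = mdStep (fun i => f ⁻¹'o P i) p := by
  obtain ⟨u, v⟩ := p
  rw [mdStep_eq (P := fun i => f ⁻¹'o P i) fun i => ⟨fun _ _ _ => (hP i).trans _ _ _⟩,
    Prod.map_apply, mdStep_eq hP]
  simp only [apply_ite (f ⁻¹'o ·), preimage_adopt, support_preimage]
  rfl

lemma preimage_MD (hP : ∀ i, IsTrans α (P i)) (f : β ↪ α) (σ : List (β × β)) :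
    (fun i => f ⁻¹'o MD (σ.map (Prod.map f f)) P i) = MD σ (fun i => f ⁻¹'o P i) := by
  induction σ generalizing P with
  | nil => rfl
  | cons p σ ih =>
    exact (ih (isTrans_mdStep hP (p.map f f))).trans (congrArg (MD σ) (preimage_mdStep hP f p))

end MajorityDynamics

section Support

variable {α : Type} {n : ℕ} {P Q : Fin n → Pref α} {u v : α}

/-- At least half of the agents rank `u` above `v`, which rules out `v` as a Condorcet winner. -/
def WeakMajority (P : Fin n → Pref α) (u v : α) : Prop :=
  n ≤ 2 * support P u v

lemma support_mono (hPQ : P ≤ Q) (u v : α) : support P u v ≤ support Q u v :=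
  Finset.card_le_card (Finset.monotone_filter_right _ fun i _ => hPQ i u v)

lemma WeakMajority.mono (h : WeakMajority P u v) (hPQ : P ≤ Q) : WeakMajority Q u v :=
  h.trans (Nat.mul_le_mul_left 2 (support_mono hPQ u v))

lemma support_eq_of_forall (h : ∀ i, P i u v) : support P u v = n := by
  simp [support, h]

lemma support_eq_zero_of_forall (h : ∀ i, ¬ P i u v) : support P u v = 0 := by
  simp [support, h]

lemma support_fin_four (P : Fin 4 → Pref α) (u v : α) :
    support P u v = (if P 0 u v then 1 else 0) + (if P 1 u v then 1 else 0) +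
      (if P 2 u v then 1 else 0) + (if P 3 u v then 1 else 0) := by
  rw [support, Finset.card_filter, Fin.sum_univ_four]

lemma support_add_support_le (hP : ∀ i, IsPref (P i)) (u v : α) :
    support P u v + support P v u ≤ n := by
  have hdisj : Disjoint (Finset.univ.filter fun i => P i u v)
      (Finset.univ.filter fun i => P i v u) :=
    Finset.disjoint_filter.mpr fun i _ => (hP i).asymm
  calc support P u v + support P v u = _ := (Finset.card_union_of_disjoint hdisj).symm
    _ ≤ n := card_finset_fin_le _

lemma support_add_support_mdStep (hP : ∀ i, IsPref (P i)) (h : support P v u ≤ support P u v) :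
    support P v u + support (mdStep P (u, v)) u v = n := by
  have hiff (i) : mdStep P (u, v) i u v ↔ ¬ P i v u := by
    have := (hP i).asymm (x := u) (y := v)
    simp only [mdStep_eq fun i => (hP i).isTrans, if_pos h, adopt]
    tauto
  simp only [support, hiff]
  exact (Finset.card_filter_add_card_filter_not _).trans (Finset.card_fin n)

lemma weakMajority_mdStep (hP : ∀ i, IsPref (P i)) (h : support P v u ≤ support P u v) :
    WeakMajority (mdStep P (u, v)) u v := by
  have hle := support_add_support_le hP u v
  have hadd := support_add_support_mdStep hP h
  unfold WeakMajority
  omega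

lemma WeakMajority.not_condorcetWinner (h : WeakMajority P u v) (hP : ∀ i, IsPref (P i))
    (huv : u ≠ v) : ¬ CondorcetWinner P v := by
  intro hv
  have hlt := hv u huv
  have hle := support_add_support_le hP u v
  unfold WeakMajority at h
  omega

end Support

section UpdateOrder

variable {α : Type}

lemma count_append_map_swap [DecidableEq α] (l : List (α × α)) (a b : α) :
    (l ++ l.map Prod.swap).count (a, b) = l.count (a, b) + l.count (b, a) := by
  rw [List.count_append, ← List.count_map_of_injective l _ Prod.swap_injective (b, a),
    Prod.swap_prod_mk]

lemma mem_append_map_swap_comm (l : List (α × α)) (a b : α) :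
    (b, a) ∈ l ++ l.map Prod.swap ↔ (a, b) ∈ l ++ l.map Prod.swap := by
  have hswap (x y : α) : (x, y) ∈ l.map Prod.swap ↔ (y, x) ∈ l :=
    List.mem_map_of_injective (a := (y, x)) Prod.swap_injective
  rw [List.mem_append, List.mem_append, hswap, hswap, or_comm]

lemma exists_isUpdateOrder_append [Finite α] [DecidableEq α] {l : List (α × α)}
    (hl : (l ++ l.map Prod.swap).Nodup) : ∃ τ, IsUpdateOrder (l ++ τ) := by
  have := Fintype.ofFinite α
  let τ := (Finset.univ.filter fun p : α × α =>
    p ∉ l ++ l.map Prod.swap ∧ WellOrderingRel p.1 p.2).toList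
  have mem_τ (p : α × α) : p ∈ τ ↔ p ∉ l ++ l.map Prod.swap ∧ WellOrderingRel p.1 p.2 := by
    simp only [τ, Finset.mem_toList, Finset.mem_filter_univ]
  have hτ : τ.Nodup := Finset.nodup_toList _
  refine ⟨τ, ?_, fun a b hab => ?_⟩
  · rintro ⟨a, _⟩ hp ⟨⟩
    rcases List.mem_append.mp hp with hpl | hpτ
    · exact hl.disjoint hpl (List.mem_map_of_mem hpl)
    · exact irrefl a ((mem_τ _).mp hpτ).2
  have hcount : (l ++ τ).count (a, b) + (l ++ τ).count (b, a) =
      (l ++ l.map Prod.swap).count (a, b) + (τ.count (a, b) + τ.count (b, a)) := by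
    rw [count_append_map_swap, List.count_append, List.count_append]
    omega
  simp only [hcount, hl.count, hτ.count, mem_τ, mem_append_map_swap_comm l a b]
  have hasymm : WellOrderingRel a b → ¬ WellOrderingRel b a := asymm
  have htri := trichotomous_of WellOrderingRel a b
  grind

end UpdateOrder

section Extension

variable {α β : Type} {n : ℕ}

/-- The extension of a preference `R` along an embedding `f` that ranks the alternatives outside
the range of `f` below those in the range and leaves them unranked among each other. -/
def extendBelow (f : β ↪ α) (R : Pref β) : Pref α :=
  fun x y => Relation.Map R f f x y ∨ x ∈ Set.range f ∧ y ∉ Set.range f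

lemma preimage_extendBelow (f : β ↪ α) (R : Pref β) : f ⁻¹'o extendBelow f R = R := by
  ext x y
  simp [Order.Preimage, extendBelow, Relation.Map]

lemma isPref_extendBelow (f : β ↪ α) {R : Pref β} (hR : IsPref R) : IsPref (extendBelow f R) := by
  constructor
  · rintro x (⟨u, v, huv, rfl, hvu⟩ | ⟨hx, hx'⟩)
    · exact hR.1 u (f.injective hvu ▸ huv)
    · exact hx' hx
  · rintro x y z (⟨u, v, huv, rfl, rfl⟩ | ⟨-, hy⟩) (⟨v', w, hvw, hv, rfl⟩ | ⟨hy', hz⟩)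
    · obtain rfl := f.injective hv
      exact .inl ⟨u, w, hR.2 huv hvw, rfl, rfl⟩
    · exact .inr ⟨⟨u, rfl⟩, hz⟩
    · exact absurd ⟨v', hv⟩ hy
    · exact absurd hy' hy

lemma support_extendBelow (f : β ↪ α) (P : Fin n → Pref β) (u v : β) :
    support (fun i => extendBelow f (P i)) (f u) (f v) = support P u v := by
  simp only [← support_preimage, preimage_extendBelow]

lemma CondorcetWinner.extendBelow {P : Fin n → Pref β} {a : β} (ha : CondorcetWinner P a)
    (hn : 0 < n) (f : β ↪ α) : CondorcetWinner (fun i => extendBelow f (P i)) (f a) := by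
  intro y hya
  by_cases hy : y ∈ Set.range f
  · obtain ⟨b, rfl⟩ := hy
    simpa only [support_extendBelow] using ha b (ne_of_apply_ne f hya)
  · rw [support_eq_zero_of_forall, support_eq_of_forall]
    · exact hn
    · exact fun i => .inr ⟨⟨a, rfl⟩, hy⟩
    · rintro i (⟨u, -, -, rfl, -⟩ | ⟨hy', -⟩)
      · exact hy ⟨u, rfl⟩
      · exact hy hy'

lemma weakMajority_extendBelow (f : β ↪ α) (P : Fin n → Pref β) (a : β) {y : α}
    (hy : y ∉ Set.range f) : WeakMajority (fun i => extendBelow f (P i)) (f a) y := by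
  rw [WeakMajority, support_eq_of_forall fun i => .inr ⟨⟨a, rfl⟩, hy⟩]
  omega

lemma WeakMajority.MD_extendBelow {P : Fin n → Pref β} (hP : ∀ i, IsPref (P i))
    {l : List (β × β)} {u v : β} (h : WeakMajority (MD l P) u v) (f : β ↪ α) :
    WeakMajority (MD (l.map (Prod.map f f)) fun i => extendBelow f (P i)) (f u) (f v) := by
  have hQ (i) := (isPref_extendBelow f (hP i)).isTrans
  simpa only [WeakMajority, ← support_preimage, preimage_MD hQ, preimage_extendBelow] using h

theorem exists_not_condorcetWinner_MD_of_embedding [Finite α] [DecidableEq α] (f : β ↪ α)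
    {P : Fin n → Pref β} (hP : ∀ i, IsPref (P i)) {a : β} (ha : CondorcetWinner P a)
    {l : List (β × β)} (hl : (l ++ l.map Prod.swap).Nodup)
    (hbeaten : ∀ v, ∃ u ≠ v, WeakMajority (MD l P) u v) :
    ∃ (Q : Fin n → Pref α) (σ : List (α × α)),
      (∀ i, IsPref (Q i)) ∧ (∃ a, CondorcetWinner Q a) ∧ IsUpdateOrder σ ∧
      ∀ b, ¬ CondorcetWinner (MD σ Q) b := by
  set Q : Fin n → Pref α := fun i => extendBelow f (P i)
  set l' := l.map (Prod.map f f) with hl'_def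
  have hl' : (l' ++ l'.map Prod.swap).Nodup := by
    rw [hl'_def, List.map_map, ← Prod.map_comp_swap, ← List.map_map, ← List.map_append]
    exact hl.map (f.injective.prodMap f.injective)
  obtain ⟨τ, hσ⟩ := exists_isUpdateOrder_append hl'
  have hQ (i) : IsPref (Q i) := isPref_extendBelow f (hP i)
  have hn : 0 < n := by
    obtain ⟨u, hu, -⟩ := hbeaten a
    have hlt := ha u hu
    have hle := support_add_support_le hP u a
    omega
  refine ⟨Q, l' ++ τ, hQ, ⟨f a, ha.extendBelow hn f⟩, hσ, fun y => ?_⟩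
  obtain ⟨x, hxy, hmaj⟩ : ∃ x ≠ y, WeakMajority (MD l' Q) x y := by
    by_cases hy : y ∈ Set.range f
    · obtain ⟨v, rfl⟩ := hy
      obtain ⟨u, huv, hmaj⟩ := hbeaten v
      exact ⟨f u, f.injective.ne huv, hmaj.MD_extendBelow hP f⟩
    · exact ⟨f a, fun h => hy ⟨a, h⟩, (weakMajority_extendBelow f P a hy).mono (le_MD l' Q)⟩
  have hle : MD l' Q ≤ MD (l' ++ τ) Q := by
    simpa only [MD, List.foldl_append] using le_MD τ (MD l' Q)
  exact (hmaj.mono hle).not_condorcetWinner (isPref_MD hQ hσ.1) hxy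

end Extension

section FourAlternatives

/-- The profile of the counterexample: four agents, each given by the list of pairs she ranks.
The alternatives `0, 1, 2, 3` are the `a, b, c, d` of the proof idea above. -/
def reversalProfile (i : Fin 4) : Pref (Fin 4) := fun x y =>
  (x, y) ∈ (![[(1, 2), (3, 0)],
    [(2, 1), (0, 3)],
    [(0, 1), (0, 2), (0, 3), (2, 1)],
    [(1, 2)]] : Fin 4 → List (Fin 4 × Fin 4)) i

lemma isPref_reversalProfile (i : Fin 4) : IsPref (reversalProfile i) := by
  constructor
  · intro x
    fin_cases i <;> fin_cases x <;> simp [reversalProfile]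
  · intro x y z
    fin_cases i <;> simp [reversalProfile] <;> omega

lemma condorcetWinner_reversalProfile : CondorcetWinner reversalProfile 0 := by
  intro b hb
  fin_cases b <;> simp [support_fin_four, reversalProfile] at hb ⊢

lemma support_reversalProfile_three_two_le :
    support reversalProfile 3 2 ≤ support reversalProfile 2 3 := by
  simp [support_fin_four, reversalProfile]

lemma support_mdStep_reversalProfile_zero_one_le :
    support (mdStep reversalProfile (2, 3)) 0 1 ≤ support (mdStep reversalProfile (2, 3)) 1 0 := by
  rw [mdStep_eq fun i => (isPref_reversalProfile i).isTrans]
  simp only [if_pos support_reversalProfile_three_two_le]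
  simp [support_fin_four, adopt, reversalProfile]

lemma exists_weakMajority_MD_reversalProfile (v : Fin 4) :
    ∃ u ≠ v, WeakMajority (MD [(2, 3), (1, 0)] reversalProfile) u v := by
  have hpref := isPref_reversalProfile
  have hcd : WeakMajority (mdStep reversalProfile (2, 3)) 2 3 :=
    weakMajority_mdStep hpref support_reversalProfile_three_two_le
  have hba : WeakMajority (MD [(2, 3), (1, 0)] reversalProfile) 1 0 :=
    weakMajority_mdStep (isPref_mdStep hpref (by simp)) support_mdStep_reversalProfile_zero_one_le
  have hcb : WeakMajority reversalProfile 2 1 := by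
    simp [WeakMajority, support_fin_four, reversalProfile]
  have hbc : WeakMajority reversalProfile 1 2 := by
    simp [WeakMajority, support_fin_four, reversalProfile]
  fin_cases v
  · exact ⟨1, by simp, hba⟩
  · exact ⟨2, by simp, hcb.mono (le_MD _ _)⟩
  · exact ⟨1, by simp, hbc.mono (le_MD _ _)⟩
  · exact ⟨2, by simp, hcd.mono (le_mdStep _ _)⟩

end FourAlternatives

/-- For every `m > 3` there exist a profile over `m` alternatives with a
Condorcet winner and an update order `σ` such that `MD_σ(P)` has no Condorcet winner. -/
theorem stmt_2 (m : ℕ) (hm : 3 < m) :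
    ∃ (n : ℕ) (P : Fin n → Pref (Fin m)) (σ : List (Fin m × Fin m)),
      (∀ i, IsPref (P i)) ∧ (∃ a, CondorcetWinner P a) ∧ IsUpdateOrder σ ∧
      ∀ b, ¬ CondorcetWinner (MD σ P) b := by
  obtain ⟨P, σ, h⟩ := exists_not_condorcetWinner_MD_of_embedding (Fin.castLEEmb hm)
    isPref_reversalProfile condorcetWinner_reversalProfile (l := [(2, 3), (1, 0)]) (by simp)
    exists_weakMajority_MD_reversalProfile
  exact ⟨4, P, σ, h⟩

end
end

section
/- Majority dynamics does not preserve PlurUD-consensus existence: there exist a profile P (over at least 3 alternatives) that has a PlurUD-consensus alternative, and an update order σ, such that MD_σ(P) has no PlurUD-consensus alternative. -/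
attribute [local instance] Classical.propDecidable

noncomputable section

variable {A : Type} [Fintype A] [DecidableEq A]

/-!
With alternatives `0, 1, 2`, let one agent hold only `0 ≻ 1` and another only `1 ≻ 2`. Alternative
`0` is the only one that both leave undominated. Nobody ranks `2` against `0`, so discussing the
pair `(2, 0)` first makes both agents adopt `2 ≻ 0`. By transitivity both preferences are then
complete, namely `2 ≻ 0 ≻ 1` and `1 ≻ 2 ≻ 0`, so nothing changes afterwards and `2` and `1` tie for
the plurality of undominated positions.
-/

section AddPair

variable {α : Type} (r : Pref α) (a b : α)

/-- The preference obtained from `r` by declaring `a ≻ b` and everything that then follows by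
transitivity. For transitive `r` one round of consequences suffices, so this explicit form is the
transitive closure that `mdStep` takes. -/
def addPair : Pref α := fun x y => r x y ∨ ((x = a ∨ r x a) ∧ (y = b ∨ r b y))

instance isTrans_addPair [IsTrans α r] : IsTrans α (addPair r a b) where
  trans x y z := by
    rintro (hxy | ⟨hxa, hby⟩) (hyz | ⟨hya, hbz⟩)
    · exact .inl (_root_.trans hxy hyz)
    · exact .inr ⟨.inr (hya.elim (· ▸ hxy) (_root_.trans hxy)), hbz⟩
    · exact .inr ⟨hxa, .inr (hby.elim (· ▸ hyz) (_root_.trans · hyz))⟩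
    · exact .inr ⟨hxa, hbz⟩

theorem transGen_or_pair_eq_addPair [IsTrans α r] :
    Relation.TransGen (fun x y => r x y ∨ (x = a ∧ y = b)) = addPair r a b := by
  refine le_antisymm (Relation.transGen_minimal ?_) ?_
  · rintro x y (hxy | ⟨rfl, rfl⟩)
    · exact .inl hxy
    · exact .inr ⟨.inl rfl, .inl rfl⟩
  · rintro x y (hxy | ⟨rfl | hxa, rfl | hby⟩)
    · exact .single (.inl hxy)
    · exact .single (.inr ⟨rfl, rfl⟩)
    · exact .head (.inr ⟨rfl, rfl⟩) (.single (.inl hby))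
    · exact .head (.inl hxa) (.single (.inr ⟨rfl, rfl⟩))
    · exact .head (.inl hxa) (.head (.inr ⟨rfl, rfl⟩) (.single (.inl hby)))

end AddPair

section Dynamics

variable {α : Type} {n : ℕ} {P : Fin n → Pref α} {a b : α}

theorem support_eq_zero_iff : support P a b = 0 ↔ ∀ i, ¬ P i a b := by
  simp [support, Finset.filter_eq_empty_iff]

theorem mdStep_eq_self {p : α × α} (ranked : ∀ i, P i p.1 p.2 ∨ P i p.2 p.1) : mdStep P p = P :=
  funext fun i => if_pos (ranked i)

theorem MD_eq_self {σ : List (α × α)} (ranked : ∀ p ∈ σ, ∀ i, P i p.1 p.2 ∨ P i p.2 p.1) :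
    MD σ P = P := by
  induction σ with
  | nil => rfl
  | cons p σ ih =>
    obtain ⟨ranked_head, ranked_tail⟩ := List.forall_mem_cons.1 ranked
    change MD σ (mdStep P p) = P
    rw [mdStep_eq_self ranked_head, ih ranked_tail]

theorem mdStep_eq_addPair [∀ i, IsTrans α (P i)] (not_ab : ∀ i, ¬ P i a b)
    (not_ba : ∀ i, ¬ P i b a) : mdStep P (a, b) = fun i => addPair (P i) a b := by
  have tie : support P b a ≤ support P a b :=
    ((support_eq_zero_iff.2 not_ba).trans (support_eq_zero_iff.2 not_ab).symm).le
  funext i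
  rw [← transGen_or_pair_eq_addPair]
  exact (if_neg (not_or.2 ⟨not_ab i, not_ba i⟩)).trans (if_pos tie)

end Dynamics

section Plurality

variable {α : Type} {n : ℕ} {P : Fin n → Pref α} {a : α}

theorem udCount_eq_iff_forall_undominated : udCount P a = n ↔ ∀ i, Undominated (P i) a := by
  simpa [udCount] using
    Finset.card_filter_eq_iff (s := Finset.univ) (p := fun i => Undominated (P i) a)

theorem udCount_le (P : Fin n → Pref α) (a : α) : udCount P a ≤ n := by
  simpa [udCount] using Finset.card_filter_le Finset.univ fun i => Undominated (P i) a

theorem UnanUDConsensus.plurUDConsensus (h : UnanUDConsensus P a) (hn : 0 < n) :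
    PlurUDConsensus P a := by
  have count_a : udCount P a = n := udCount_eq_iff_forall_undominated.2 h.1
  refine ⟨⟨hn.trans_eq count_a.symm, fun b => (udCount_le P b).trans_eq count_a.symm⟩, ?_⟩
  exact fun b b_top => h.2 b <| udCount_eq_iff_forall_undominated.1 <|
    (udCount_le P b).antisymm (count_a.symm.trans_le (b_top.2 a))

variable {top : Fin n → α}

theorem plurUDTop_of_injective_top (undominated_iff : ∀ i a, Undominated (P i) a ↔ a = top i)
    (top_injective : Function.Injective top) (i : Fin n) : PlurUDTop P (top i) := by
  have count_le_one (b : α) : udCount P b ≤ 1 := by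
    simp only [udCount, undominated_iff, Finset.card_le_one, Finset.mem_filter_univ]
    exact fun j hj k hk => top_injective (hj.symm.trans hk)
  have count_pos : 0 < udCount P (top i) :=
    Finset.card_pos.2 ⟨i, Finset.mem_filter_univ i |>.2 ((undominated_iff i _).2 rfl)⟩
  exact ⟨count_pos, fun b => (count_le_one b).trans count_pos⟩

theorem not_plurUDConsensus_of_injective_top
    (undominated_iff : ∀ i a, Undominated (P i) a ↔ a = top i)
    (top_injective : Function.Injective top) (hn : 1 < n) (a : α) : ¬ PlurUDConsensus P a := by
  intro consensus
  have top_eq (i : Fin n) : top i = a :=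
    consensus.2 _ (plurUDTop_of_injective_top undominated_iff top_injective i)
  have : Nontrivial (Fin n) := Fin.nontrivial_iff_two_le.2 hn
  obtain ⟨i, j, hij⟩ := exists_pair_ne (Fin n)
  exact hij (top_injective ((top_eq i).trans (top_eq j).symm))

end Plurality

section Example

/-- The two-agent profile in which agent `0` holds only `0 ≻ 1` and agent `1` only `1 ≻ 2`. -/
def linkProfile (i : Fin 2) : Pref (Fin 3) := fun x y => x = i.castSucc ∧ y = i.succ

theorem isPref_linkProfile (i : Fin 2) : IsPref (linkProfile i) :=
  ⟨fun _ hxx => i.castSucc_lt_succ.ne (hxx.1.symm.trans hxx.2),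
    fun _ _ _ hxy hyz => (i.castSucc_lt_succ.ne (hyz.1.symm.trans hxy.2)).elim⟩

instance isTrans_linkProfile (i : Fin 2) : IsTrans (Fin 3) (linkProfile i) :=
  ⟨(isPref_linkProfile i).2⟩

theorem unanUDConsensus_linkProfile : UnanUDConsensus linkProfile 0 := by
  unfold UnanUDConsensus Undominated linkProfile
  decide

theorem addPair_linkProfile_total (i : Fin 2) {x y : Fin 3} (hxy : x ≠ y) :
    addPair (linkProfile i) 2 0 x y ∨ addPair (linkProfile i) 2 0 y x := by
  unfold addPair linkProfile
  revert i x y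
  decide

theorem undominated_addPair_linkProfile_iff (i : Fin 2) (a : Fin 3) :
    Undominated (addPair (linkProfile i) 2 0) a ↔ a = ![2, 1] i := by
  unfold Undominated addPair linkProfile
  revert i a
  decide

theorem MD_linkProfile {σ : List (Fin 3 × Fin 3)} (hσ : ∀ p ∈ σ, p.1 ≠ p.2) :
    MD ((2, 0) :: σ) linkProfile = fun i => addPair (linkProfile i) 2 0 := by
  have step : mdStep linkProfile (2, 0) = fun i => addPair (linkProfile i) 2 0 := by
    apply mdStep_eq_addPair <;> (unfold linkProfile; decide)
  change MD σ (mdStep linkProfile (2, 0)) = _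
  rw [step]
  exact MD_eq_self fun p hp i => addPair_linkProfile_total i (hσ p hp)

end Example

/-- Majority dynamics does not preserve PlurUD-consensus existence. -/
theorem stmt_3 :
    ∃ (m n : ℕ) (P : Fin n → Pref (Fin m)) (a : Fin m) (σ : List (Fin m × Fin m)),
      3 ≤ m ∧ (∀ i, IsPref (P i)) ∧ PlurUDConsensus P a ∧ IsUpdateOrder σ ∧
      ∀ b, ¬ PlurUDConsensus (MD σ P) b := by
  have update_order : IsUpdateOrder [((2 : Fin 3), (0 : Fin 3)), (0, 1), (1, 2)] := by
    constructor <;> decide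
  refine ⟨3, 2, linkProfile, 0, _, le_rfl, isPref_linkProfile,
    unanUDConsensus_linkProfile.plurUDConsensus two_pos, update_order, ?_⟩
  rw [MD_linkProfile (List.forall_mem_cons.1 update_order.1).2]
  exact not_plurUDConsensus_of_injective_top undominated_addPair_linkProfile_iff (by decide)
    one_lt_two

end
end
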